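/- arXiv:2507.06324 — 3 statements merged into one kernel-verified Lean document; each statement's English description precedes it below -/
import Mathlib

section
/- Let D, p, q ∈ ℕ with D = p + q. For all j, k : Fin q → Fin D, contracting two Levi-Civita symbols over their first p indices gives ∑_{i : Fin p → Fin D} ε(i ⊕ j) · ε(i ⊕ k) = p! · δ(j, k), as an identity in ℤ (or any commutative ring). (In unit-weight conventions this is ε_{i₁⋯i_p j₁⋯j_q} ε^{i₁⋯i_p k₁⋯k_q} = p! q! δ^{k₁⋯k_q}_{j₁⋯j_q}.) -/
/-- Levi-Civita symbol: the determinant of the `D × D` matrix whose `(a,b)` entry is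
`1` if `i a = b` and `0` otherwise; it equals the sign of `i` when `i` is a
permutation of `Fin D` and `0` otherwise. -/
def eps (R : Type*) [CommRing R] {D : ℕ} (i : Fin D → Fin D) : R :=
  Matrix.det (Matrix.of fun a b => if i a = b then (1 : R) else 0)

/-- Generalized Kronecker delta: the determinant of the `p × p` matrix whose
`(a,b)` entry is `1` if `j a = i b` and `0` otherwise. -/
def gdelta (R : Type*) [CommRing R] {p D : ℕ} (j i : Fin p → Fin D) : R :=
  Matrix.det (Matrix.of fun a b => if j a = i b then (1 : R) else 0)

/-!
Since `ε(i) ε(i') = δ(i, i')`, the claim is about `∑ i, δ(i ⊕ j, i ⊕ k)`. If `i ⊕ j` repeats an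
index, two rows of the determinant agree. Otherwise the matrix is block upper triangular, with the
identity as its `i`-`i` block, and its determinant is `δ(j, k)`. So the sum is `δ(j, k)` times the
number of injective `i` avoiding the values of an injective `j`, which is `p!` when `D = p + q`.
-/

open Finset Function

section Matrix

variable {R m n ι : Type*} [CommRing R] [Fintype m] [Fintype n] [DecidableEq m] [DecidableEq n]
  [DecidableEq ι]

theorem det_submatrix_one_eq_zero_of_not_injective {j : n → ι} (hj : ¬ Injective j) (k : n → ι) :
    ((1 : Matrix ι ι R).submatrix j k).det = 0 := by
  obtain ⟨a, b, hab, hne⟩ := not_injective_iff.mp hj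
  exact Matrix.det_zero_of_row_eq hne
    (funext fun c => congrFun (congrArg (1 : Matrix ι ι R) hab) (k c))

theorem det_submatrix_one_sumElim {i : m → ι} {j : n → ι} (h : Injective (Sum.elim i j))
    (k : n → ι) :
    ((1 : Matrix ι ι R).submatrix (Sum.elim i j) (Sum.elim i k)).det =
      ((1 : Matrix ι ι R).submatrix j k).det := by
  obtain ⟨hi, -, hij⟩ := Sum.elim_injective.mp h
  have hblocks : (1 : Matrix ι ι R).submatrix (Sum.elim i j) (Sum.elim i k) =
      Matrix.fromBlocks 1 (Matrix.submatrix 1 i k) 0 (Matrix.submatrix 1 j k) := by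
    rw [Matrix.ext_iff_blocks]
    refine ⟨Matrix.submatrix_one i hi, rfl, ?_, rfl⟩
    ext b a
    exact Matrix.one_apply_ne (hij a b).symm
  rw [hblocks, Matrix.det_fromBlocks_zero₂₁, Matrix.det_one, one_mul]

end Matrix

theorem card_filter_injective_append {α : Type*} [Fintype α] [DecidableEq α] (p : ℕ) {q : ℕ}
    {j : Fin q → α} (hj : Injective j) :
    #{i : Fin p → α | Injective (Fin.append i j)} = (Fintype.card α - q).descFactorial p := by
  let e : {i : Fin p → α // Injective (Fin.append i j)} ≃ (Fin p ↪ ↥(Set.range j)ᶜ) :=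
    { toFun i := ⟨fun a => ⟨i.1 a, fun ⟨b, hab⟩ =>
          (Fin.append_injective_iff.mp i.2).2.2 a b hab.symm⟩,
        fun a b hab => (Fin.append_injective_iff.mp i.2).1 (congrArg Subtype.val hab)⟩
      invFun f := ⟨fun a => f a, Fin.append_injective_iff.mpr
        ⟨Subtype.val_injective.comp f.injective, hj, fun a b hab => (f a).2 ⟨b, hab.symm⟩⟩⟩ }
  rw [← Fintype.card_subtype, Fintype.card_congr e, Fintype.card_embedding_eq,
    Fintype.card_compl_set, Set.card_range_of_injective hj, Fintype.card_fin, Fintype.card_fin]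

section Gdelta

variable (R : Type*) [CommRing R]

theorem gdelta_eq_det_submatrix_one {p D : ℕ} (j k : Fin p → Fin D) :
    gdelta R j k = ((1 : Matrix (Fin D) (Fin D) R).submatrix j k).det :=
  rfl

theorem eps_mul_eps {D : ℕ} (i j : Fin D → Fin D) : eps R i * eps R j = gdelta R i j := by
  have eps_eq (i : Fin D → Fin D) : eps R i = ((1 : Matrix _ _ R).submatrix i id).det := rfl
  rw [eps_eq i, eps_eq j, ← Matrix.det_transpose (Matrix.submatrix 1 j id), ← Matrix.det_mul,
    Matrix.transpose_submatrix, Matrix.transpose_one, ← Matrix.submatrix_mul _ _ _ _ _ bijective_id,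
    one_mul, gdelta_eq_det_submatrix_one]

theorem gdelta_eq_zero_of_not_injective {p D : ℕ} {j : Fin p → Fin D} (hj : ¬ Injective j)
    (k : Fin p → Fin D) : gdelta R j k = 0 :=
  det_submatrix_one_eq_zero_of_not_injective hj k

theorem gdelta_append_of_injective {p q D : ℕ} {i : Fin p → Fin D} {j : Fin q → Fin D}
    (h : Injective (Fin.append i j)) (k : Fin q → Fin D) :
    gdelta R (Fin.append i j) (Fin.append i k) = gdelta R j k := by
  have append_comp (l : Fin q → Fin D) : Fin.append i l ∘ finSumFinEquiv = Sum.elim i l :=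
    Fin.append_comp_sumElim
  rw [gdelta_eq_det_submatrix_one, ← Matrix.det_submatrix_equiv_self finSumFinEquiv,
    Matrix.submatrix_submatrix, append_comp, append_comp, det_submatrix_one_sumElim,
    gdelta_eq_det_submatrix_one]
  exact append_comp j ▸ h.comp finSumFinEquiv.injective

/-- If `D < q`, the subtraction truncates, but then `j` is not injective and both sides vanish. -/
theorem sum_gdelta_append (p : ℕ) {q D : ℕ} (j k : Fin q → Fin D) :
    ∑ i : Fin p → Fin D, gdelta R (Fin.append i j) (Fin.append i k) =
      (D - q).descFactorial p * gdelta R j k := by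
  by_cases hj : Injective j
  · calc ∑ i : Fin p → Fin D, gdelta R (Fin.append i j) (Fin.append i k)
        = ∑ i : Fin p → Fin D, if Injective (Fin.append i j) then gdelta R j k else 0 := by
          refine sum_congr rfl fun i _ => ?_
          split_ifs with h
          · exact gdelta_append_of_injective R h k
          · exact gdelta_eq_zero_of_not_injective R h _
      _ = #{i : Fin p → Fin D | Injective (Fin.append i j)} * gdelta R j k := by
          rw [← sum_filter, sum_const, nsmul_eq_mul]
      _ = (D - q).descFactorial p * gdelta R j k := by
          rw [card_filter_injective_append p hj, Fintype.card_fin]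
  · have happend (i : Fin p → Fin D) : ¬ Injective (Fin.append i j) :=
      fun h => hj (Fin.append_injective_iff.mp h).2.1
    simp only [gdelta_eq_zero_of_not_injective R hj, mul_zero,
      gdelta_eq_zero_of_not_injective R (happend _), sum_const_zero]

theorem eps_contract_eps_general (p q : ℕ) (j k : Fin q → Fin (p + q)) :
    ∑ i : Fin p → Fin (p + q), eps R (Fin.append i j) * eps R (Fin.append i k) =
      p.factorial * gdelta R j k := by
  simp only [eps_mul_eps, sum_gdelta_append, Nat.add_sub_cancel, Nat.descFactorial_self]

end Gdelta

/-- Contraction of two Levi-Civita symbols over their first `p` indices in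
dimension `D = p + q`: `∑ i, ε(i ⊕ j) · ε(i ⊕ k) = p! · δ(j, k)`. -/
theorem eps_contract_eps (p q : ℕ) (j k : Fin q → Fin (p + q)) :
    ∑ i : Fin p → Fin (p + q), eps ℤ (Fin.append i j) * eps ℤ (Fin.append i k)
      = (p.factorial : ℤ) * gdelta ℤ j k :=
  eps_contract_eps_general ℤ p q j k
end

section
/- (Consistency condition for the constrained Hodge dual ansatz.) Let D ≥ 1 and let g : Matrix (Fin D) (Fin D) ℝ be symmetric and invertible with inverse g⁻¹. Then for every V : Fin D → ℝ: det g · ∑_{j : Fin D} ∑_{r : Fin D} ∑_{a : Fin (D−1) → Fin D} ∑_{b : Fin (D−1) → Fin D} ε(j ::ᵥ a) · ε(r ::ᵥ b) · V j · V r · ∏_{m : Fin (D−1)} g⁻¹ (a m) (b m) = (D−1)! · (∑_{j, r : Fin D} g j r · V j · V r). Consequently, the double-dual consistency requirement on the projection vector V in the constrained Hodge dual ansatz is exactly the normalization g_{jr} V_j V_r = 1. -/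
/-!
For any square matrix `A`, contracting two Levi-Civita symbols with `A` in all slots but the first
gives `n!` times an adjugate entry,
`∑ a b, ε(j ::ᵥ a) ε(r ::ᵥ b) ∏ m, A (a m) (b m) = n! * adj(A) r j`: summing over `b` is the Leibniz
expansion of the determinant with rows `e_r, A (a 0), A (a 1), …`, which is `ε(j ::ᵥ a)` times the
determinant of `A` with row `j` replaced by `e_r`, and `∑ a, ε(j ::ᵥ a) ^ 2 = n!`. For `A = g⁻¹`,
the identity `g.det • adj(g⁻¹) = g` recovers the metric.
-/

section LeviCivita

open Function Matrix

variable {R : Type*} [CommRing R] {n : ℕ}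

theorem eps_eq_zero_of_not_injective {i : Fin n → Fin n} (hi : ¬ Injective i) : eps R i = 0 := by
  obtain ⟨k, l, hkl, hne⟩ := not_injective_iff.mp hi
  exact det_zero_of_row_eq hne (by ext; simp [hkl])

theorem det_submatrix_id_right (A : Matrix (Fin n) (Fin n) R) (i : Fin n → Fin n) :
    (A.submatrix i id).det = eps R i * A.det := by
  have h : A.submatrix i id = (1 : Matrix (Fin n) (Fin n) R).submatrix i id * A :=
    (one_submatrix_mul i (Equiv.refl _) A).symm
  rw [h, det_mul]
  rfl

theorem eps_perm (σ : Equiv.Perm (Fin n)) : eps R σ = ((Equiv.Perm.sign σ : ℤ) : R) := by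
  simpa using (det_submatrix_id_right (1 : Matrix (Fin n) (Fin n) R) σ).symm.trans (det_permute σ 1)

theorem eps_sq_of_injective {i : Fin n → Fin n} (hi : Injective i) : eps R i ^ 2 = 1 := by
  obtain ⟨σ, rfl⟩ : ∃ σ : Equiv.Perm (Fin n), ⇑σ = i :=
    ⟨Equiv.ofBijective i (Finite.injective_iff_bijective.mp hi), rfl⟩
  rw [eps_perm, ← Int.cast_pow, ← Units.val_pow_eq_pow_val, Int.units_sq, Units.val_one,
    Int.cast_one]

theorem det_eq_sum_eps_mul_prod (A : Matrix (Fin n) (Fin n) R) :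
    A.det = ∑ i : Fin n → Fin n, eps R i * ∏ m, A m (i m) := by
  have hrows : A = fun m ↦ ∑ k, A m k • fun l ↦ if k = l then (1 : R) else 0 :=
    funext fun m ↦ pi_eq_sum_univ (A m)
  calc A.det = detRowAlternating fun m ↦ ∑ k, A m k • fun l ↦ if k = l then (1 : R) else 0 :=
        congrArg det hrows
    _ = ∑ i : Fin n → Fin n,
          detRowAlternating fun m ↦ A m (i m) • fun l ↦ if i m = l then (1 : R) else 0 :=
        detRowAlternating.toMultilinearMap.map_sum _
    _ = ∑ i : Fin n → Fin n, eps R i * ∏ m, A m (i m) :=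
        Finset.sum_congr rfl fun i _ ↦
          (detRowAlternating.toMultilinearMap.map_smul_univ _ _).trans (mul_comm _ _)

theorem det_vecCons_single (r : Fin (n + 1)) (w : Fin n → Fin (n + 1) → R) :
    det (of (vecCons (Pi.single r 1) w))
      = ∑ b : Fin n → Fin (n + 1), eps R (vecCons r b) * ∏ m, w m (b m) := by
  rw [det_eq_sum_eps_mul_prod, ← (Fin.consEquiv fun _ ↦ Fin (n + 1)).sum_comp,
    Fintype.sum_prod_type, Fintype.sum_eq_single r]
  · simp [Fin.prod_univ_succ, Fin.consEquiv, vecCons]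
  · intro k hk
    simp [Fin.prod_univ_succ, Fin.consEquiv, hk]

theorem det_vecCons_comp {j : Fin (n + 1)} {a : Fin n → Fin (n + 1)} (hj : j ∉ Set.range a)
    (A : Matrix (Fin (n + 1)) (Fin (n + 1)) R) (v : Fin (n + 1) → R) :
    det (of (vecCons v fun m ↦ A (a m))) = eps R (vecCons j a) * (A.updateRow j v).det := by
  rw [← det_submatrix_id_right]
  congr 1
  ext m l
  cases m using Fin.cases with
  | zero => simp
  | succ m => simp [updateRow_ne fun h : a m = j ↦ hj ⟨m, h⟩]

theorem card_vecCons_injective {α : Type*} [Fintype α] [DecidableEq α] (n : ℕ) (x : α) :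
    Fintype.card {a : Fin n → α // Injective (vecCons x a)}
      = (Fintype.card α - 1).descFactorial n := by
  have e : {a : Fin n → α // Injective (vecCons x a)} ≃ (Fin n ↪ {y : α // y ≠ x}) :=
    { toFun a :=
        have ha := Fin.cons_injective_iff.mp a.2
        ⟨fun m ↦ ⟨a.1 m, fun h ↦ ha.1 ⟨m, h⟩⟩, fun _ _ h ↦ ha.2 (congrArg Subtype.val h)⟩
      invFun f := ⟨fun m ↦ f m, Fin.cons_injective_iff.mpr
        ⟨fun ⟨m, h⟩ ↦ (f m).2 h, Subtype.val_injective.comp f.injective⟩⟩ }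
  simp [Fintype.card_congr e]

theorem sum_eps_vecCons_sq (j : Fin (n + 1)) :
    ∑ a : Fin n → Fin (n + 1), eps R (vecCons j a) ^ 2 = n.factorial := by
  have hsq (a : Fin n → Fin (n + 1)) :
      eps R (vecCons j a) ^ 2 = if Injective (vecCons j a) then 1 else 0 := by
    split_ifs with ha
    · exact eps_sq_of_injective ha
    · rw [eps_eq_zero_of_not_injective ha, zero_pow two_ne_zero]
  rw [Fintype.sum_congr _ _ hsq, Finset.sum_boole, ← Fintype.card_subtype, card_vecCons_injective,
    Fintype.card_fin, Nat.add_sub_cancel, Nat.descFactorial_self]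

theorem sum_eps_mul_eps_mul_prod_eq_adjugate (A : Matrix (Fin (n + 1)) (Fin (n + 1)) R)
    (j r : Fin (n + 1)) :
    ∑ a : Fin n → Fin (n + 1), ∑ b : Fin n → Fin (n + 1),
        eps R (vecCons j a) * eps R (vecCons r b) * ∏ m, A (a m) (b m)
      = n.factorial * A.adjugate r j := by
  have hsum (a : Fin n → Fin (n + 1)) :
      ∑ b : Fin n → Fin (n + 1), eps R (vecCons j a) * eps R (vecCons r b) * ∏ m, A (a m) (b m)
        = eps R (vecCons j a) ^ 2 * A.adjugate r j := by
    simp_rw [mul_assoc, ← Finset.mul_sum, ← det_vecCons_single r fun m ↦ A (a m)]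
    by_cases hj : j ∈ Set.range a
    · have h0 : eps R (vecCons j a) = 0 :=
        eps_eq_zero_of_not_injective fun h ↦ (Fin.cons_injective_iff.mp h).1 hj
      simp [h0]
    · rw [det_vecCons_comp hj, ← adjugate_apply, sq, mul_assoc]
  rw [Fintype.sum_congr _ _ hsum, ← Finset.sum_mul, sum_eps_vecCons_sq]

theorem det_smul_adjugate_inv {ι : Type*} [Fintype ι] [DecidableEq ι] {A : Matrix ι ι R}
    (hA : IsUnit A.det) : A.det • A⁻¹.adjugate = A :=
  calc A.det • A⁻¹.adjugate = A.det • (A * (A⁻¹ * A⁻¹.adjugate)) := by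
        rw [mul_nonsing_inv_cancel_left _ _ hA]
    _ = (A⁻¹.det * A.det) • A := by
        rw [mul_adjugate, Matrix.mul_smul, Matrix.mul_one, smul_smul, mul_comm]
    _ = A := by rw [det_nonsing_inv_mul_det _ hA, one_smul]

theorem det_mul_sum_eps_mul_eps_mul_prod_inv {g : Matrix (Fin (n + 1)) (Fin (n + 1)) R}
    (hg : IsUnit g.det) (j r : Fin (n + 1)) :
    g.det * ∑ a : Fin n → Fin (n + 1), ∑ b : Fin n → Fin (n + 1),
        eps R (vecCons j a) * eps R (vecCons r b) * ∏ m, g⁻¹ (a m) (b m)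
      = n.factorial * g r j := by
  rw [sum_eps_mul_eps_mul_prod_eq_adjugate, mul_left_comm, ← smul_eq_mul g.det, ← Matrix.smul_apply,
    det_smul_adjugate_inv hg]

theorem constrained_hodge_consistency_general {g : Matrix (Fin (n + 1)) (Fin (n + 1)) R}
    (hg : IsUnit g.det) (V : Fin (n + 1) → R) :
    g.det * ∑ j, ∑ r, ∑ a : Fin n → Fin (n + 1), ∑ b : Fin n → Fin (n + 1),
        eps R (vecCons j a) * eps R (vecCons r b) * V j * V r * ∏ m, g⁻¹ (a m) (b m)
      = n.factorial * ∑ j, ∑ r, g j r * V j * V r := by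
  calc
    _ = ∑ j, ∑ r, (g.det * ∑ a : Fin n → Fin (n + 1), ∑ b : Fin n → Fin (n + 1),
          eps R (vecCons j a) * eps R (vecCons r b) * ∏ m, g⁻¹ (a m) (b m)) * (V j * V r) := by
      simp only [Finset.mul_sum, Finset.sum_mul]
      congr! 4
      ring
    _ = ∑ j, ∑ r, n.factorial * g r j * (V j * V r) := by
      simp only [det_mul_sum_eps_mul_eps_mul_prod_inv hg]
    _ = ∑ r, ∑ j, n.factorial * (g r j * V r * V j) := by
      rw [Finset.sum_comm]
      congr! 2
      ring
    _ = _ := by simp only [Finset.mul_sum]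

end LeviCivita

/-- Consistency condition for the constrained Hodge dual ansatz: for a symmetric
invertible metric `g` in dimension `D + 1 ≥ 1` and any vector `V`, the double-dual
contraction reduces to `(D)! · g_{jr} V_j V_r`, so the consistency requirement is
exactly the normalization `g_{jr} V_j V_r = 1`. -/
theorem constrained_hodge_consistency (D : ℕ)
    (g : Matrix (Fin (D + 1)) (Fin (D + 1)) ℝ)
    (hsymm : g.IsSymm) (hg : IsUnit g.det) (V : Fin (D + 1) → ℝ) :
    g.det * ∑ j : Fin (D + 1), ∑ r : Fin (D + 1),
        ∑ a : Fin D → Fin (D + 1), ∑ b : Fin D → Fin (D + 1),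
          eps ℝ (Matrix.vecCons j a) * eps ℝ (Matrix.vecCons r b) * V j * V r
            * ∏ m : Fin D, g⁻¹ (a m) (b m)
      = (D.factorial : ℝ) * ∑ j : Fin (D + 1), ∑ r : Fin (D + 1), g j r * V j * V r :=
  constrained_hodge_consistency_general hg V
end

section
/- (Schouten identity.) Let R be a commutative ring and D ∈ ℕ. For every A : Fin D → R, every μ : Fin D → Fin D, and every ν : Fin D: ε(μ) · A ν = ∑_{r : Fin D} ε(Function.update μ r ν) · A (μ r). (Equivalently, antisymmetrizing a Levi-Civita symbol together with one extra index over D+1 indices in dimension D gives zero: ε_{[μ₁⋯μ_D} A_{μ]} = 0.) -/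
/-! Cramer's rule by rows expresses `det M • w` as the combination of the rows of `M` with
coefficients `det (M with row r replaced by w)`. For the matrix whose rows are the basis vectors
`e (μ r)` and `w = e ν`, these determinants are Levi-Civita symbols, and the linear map
`e i ↦ A i` turns the rule into the Schouten identity. -/

open Matrix in
theorem det_smul_eq_sum_det_updateRow_smul_row {n R : Type*} [Fintype n] [DecidableEq n]
    [CommRing R] (M : Matrix n n R) (w : n → R) :
    M.det • w = ∑ r, (M.updateRow r w).det • M.row r :=
  calc
    M.det • w = Mᵀ *ᵥ cramer Mᵀ w := by rw [mulVec_cramer, det_transpose]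
    _ = cramer Mᵀ w ᵥ* M := mulVec_transpose M _
    _ = ∑ r, cramer Mᵀ w r • M.row r := vecMul_eq_sum _ M
    _ = ∑ r, (M.updateRow r w).det • M.row r := by simp only [cramer_transpose_apply]

theorem submatrix_update_left {l m n o α : Type*} [DecidableEq l]
    (M : Matrix m n α) (f : l → m) (g : o → n) (i : l) (k : m) :
    M.submatrix (Function.update f i k) g = (M.submatrix f g).updateRow i (M.row k ∘ g) := by
  ext a b
  obtain rfl | h := eq_or_ne a i
  · simp
  · simp [h]

theorem linearCombination_row_one {R ι M : Type*} [Semiring R] [Fintype ι] [DecidableEq ι]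
    [AddCommMonoid M] [Module R M] (A : ι → M) (i : ι) :
    Fintype.linearCombination R A ((1 : Matrix ι ι R).row i) = A i := by
  simp [Fintype.linearCombination_apply, Matrix.one_apply]

theorem eps_eq_det_submatrix_one (R : Type*) [CommRing R] {D : ℕ} (i : Fin D → Fin D) :
    eps R i = ((1 : Matrix (Fin D) (Fin D) R).submatrix i id).det :=
  rfl

theorem schouten_identity_general (R : Type*) {ι M : Type*} [CommRing R] [Fintype ι]
    [DecidableEq ι] [AddCommMonoid M] [Module R M] (A : ι → M) (μ : ι → ι) (ν : ι) :
    ((1 : Matrix ι ι R).submatrix μ id).det • A ν =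
      ∑ r, ((1 : Matrix ι ι R).submatrix (Function.update μ r ν) id).det • A (μ r) := by
  let E : Matrix ι ι R := Matrix.submatrix 1 μ id
  have row_E (r : ι) : E.row r = (1 : Matrix ι ι R).row (μ r) := rfl
  have cramer := congrArg (Fintype.linearCombination R A)
    (det_smul_eq_sum_det_updateRow_smul_row E ((1 : Matrix ι ι R).row ν))
  simpa only [map_smul, map_sum, row_E, linearCombination_row_one, submatrix_update_left,
    Function.comp_id] using cramer

/-- Schouten identity: `ε(μ) · A ν = ∑ r, ε(μ with slot r replaced by ν) · A (μ r)`;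
equivalently, antisymmetrizing a Levi-Civita symbol together with one extra index
over `D + 1` indices in dimension `D` gives zero. -/
theorem schouten_identity (R : Type*) [CommRing R] (D : ℕ)
    (A : Fin D → R) (μ : Fin D → Fin D) (ν : Fin D) :
    eps R μ * A ν = ∑ r : Fin D, eps R (Function.update μ r ν) * A (μ r) := by
  simpa only [eps_eq_det_submatrix_one, smul_eq_mul] using schouten_identity_general R A μ ν
end
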